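/- arXiv:1709.07427 — 4 statements merged into one kernel-verified Lean document; each statement's English description precedes it below -/
import Mathlib

section
/- For every y > 0 and every nonzero integer n, 2π·∫_{−∞}^{∞} (H∇p₀(x,y)) · (∇pₙ(x,y)) · cos(x) dx = πn·(π²n²(2y−1) + y²(2y+3))/(y² + π²n²)³ · e^{−y}. -/
/-!
Write `fₙ(z) = 1/(z - 2πn)`, `z = x + iy`, `a = 2πn`. Since `pₙ = -(1/π) Im fₙ`, the Cauchy-Riemann
equations give `H∇p₀ · ∇pₙ = (1/π²) Im (f₀' * conj fₙ')`, that is, `1/π²` times the imaginary part of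
`1 / ((x + iy)² (x - a - iy)²)` (`integrand_eq`).

The integral of this rational function against `e^{±ix}` is found by Fourier inversion. By partial
fractions it is the Fourier transform of an explicit continuous function, an affine function of `|v|`
times an exponential on each half-line (`fourierIntegral_expProfile`); both the function and its
transform are integrable, so the inverse transform at `v = ±1/(2π)` recovers the explicit values
(`integral_exp_mul_doublePoles`). They coincide because `e^{ia} = 1`
(`integral_doublePoles_mul_cos`). With `A = πn`, taking the imaginary part reduces the claim to
`Im ((A + (y + 1)i)(A - iy)³) = -A (A²(2y - 1) + y²(2y + 3))`.
-/

open Real MeasureTheory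

/-- Poisson kernel for the upper half-plane with pole at `2 π n`. -/
noncomputable def p (n : ℤ) (x y : ℝ) : ℝ := (1 / π) * y / ((x - 2 * π * n) ^ 2 + y ^ 2)

open Set Filter Topology Asymptotics FourierTransform
open Complex (I)

lemma affine_mul_exp_isBigO (α β l : ℂ) (hl : 0 < l.re) :
    (fun v : ℝ => (α + β * v) * Complex.exp (-l * v)) =O[atTop]
      fun v => Real.exp (-(l.re / 2) * v) := by
  have hone : (fun _ : ℝ => (1 : ℝ)) =O[atTop] fun v => Real.exp (l.re / 2 * v) := by
    simpa using (isLittleO_pow_exp_pos_mul_atTop 0 (half_pos hl)).isBigO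
  have hid : (fun v : ℝ => v) =O[atTop] fun v => Real.exp (l.re / 2 * v) := by
    simpa using (isLittleO_pow_exp_pos_mul_atTop 1 (half_pos hl)).isBigO
  have haff : (fun v : ℝ => α + β * v) =O[atTop] fun v => Real.exp (l.re / 2 * v) := by
    refine IsBigO.add ?_ ?_
    · exact (isBigO_const_const α (one_ne_zero (α := ℝ)) _).trans hone
    · refine IsBigO.const_mul_left ?_ β
      refine IsBigO.trans (isBigO_of_le _ fun v => ?_) hid
      simp
  have hexp : (fun v : ℝ => Complex.exp (-l * v)) =O[atTop] fun v => Real.exp (-l.re * v) := by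
    refine isBigO_of_le _ fun v => ?_
    simp [Complex.norm_exp]
  refine (haff.mul hexp).congr_right fun v => ?_
  rw [← Real.exp_add]
  congr 1
  ring

lemma integrableOn_affine_mul_exp (α β l : ℂ) (hl : 0 < l.re) :
    IntegrableOn (fun v : ℝ => (α + β * v) * Complex.exp (-l * v)) (Ioi 0) := by
  have hc : Continuous fun v : ℝ => (α + β * v) * Complex.exp (-l * v) := by fun_prop
  have hn := integrable_of_isBigO_exp_neg (a := 0) (half_pos hl) hc.norm.continuousOn
    (affine_mul_exp_isBigO α β l hl).norm_left
  exact (integrable_norm_iff hc.aestronglyMeasurable).1 hn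

lemma integral_affine_mul_exp (α β l : ℂ) (hl : 0 < l.re) :
    ∫ v : ℝ in Ioi 0, (α + β * v) * Complex.exp (-l * v) = α / l + β / l ^ 2 := by
  have hl0 : l ≠ 0 := by rintro rfl; simp at hl
  have hderiv : ∀ v ∈ Ici (0 : ℝ), HasDerivAt
      (fun v : ℝ => (-(α / l + β / l ^ 2) + -(β / l) * v) * Complex.exp (-l * v))
      ((α + β * v) * Complex.exp (-l * v)) v := by
    intro v _
    have h1 : HasDerivAt (fun v : ℝ => (v : ℂ)) 1 v := Complex.ofRealCLM.hasDerivAt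
    have h2 := ((h1.const_mul (-(β / l))).const_add (-(α / l + β / l ^ 2))).mul
      (h1.const_mul (-l)).cexp
    refine h2.congr_deriv ?_
    field_simp
    ring
  have hlim : Tendsto
      (fun v : ℝ => (-(α / l + β / l ^ 2) + -(β / l) * v) * Complex.exp (-l * v))
      atTop (𝓝 0) := by
    refine (affine_mul_exp_isBigO _ _ l hl).trans_tendsto ?_
    refine Real.tendsto_exp_atBot.comp ?_
    exact tendsto_id.const_mul_atTop_of_neg (by linarith)
  rw [integral_Ioi_of_hasDerivAt_of_tendsto' hderiv (integrableOn_affine_mul_exp α β l hl) hlim]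
  simp

/-- The integral over `ℝ` of a function that is an affine function of `|v|` times a decaying
exponential on each half-line, with decay rates `l` and `k`. -/
lemma integral_two_sided (f : ℝ → ℂ) (α β l k : ℂ) (hl : 0 < l.re) (hk : 0 < k.re)
    (hpos : ∀ v : ℝ, 0 < v → f v = (α + β * v) * Complex.exp (-l * v))
    (hneg : ∀ v : ℝ, 0 < v → f (-v) = (α + β * v) * Complex.exp (-k * v)) :
    Integrable f ∧ ∫ v, f v = α / l + β / l ^ 2 + (α / k + β / k ^ 2) := by
  have hI : IntegrableOn f (Ioi 0) :=
    (integrableOn_affine_mul_exp α β l hl).congr_fun (fun v hv => (hpos v hv).symm)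
      measurableSet_Ioi
  have hJ : IntegrableOn (fun v => f (-v)) (Ioi 0) :=
    (integrableOn_affine_mul_exp α β k hk).congr_fun (fun v hv => (hneg v hv).symm)
      measurableSet_Ioi
  have hJ' : IntegrableOn f (Iic 0) := by
    rw [integrableOn_Iic_iff_integrableOn_Iio]
    have := IntegrableOn.comp_neg_Iio (c := 0) (f := fun v => f (-v)) (by simpa using hJ)
    simpa only [neg_neg] using this
  refine ⟨?_, ?_⟩
  · have := hJ'.union hI
    rwa [Iic_union_Ioi, integrableOn_univ] at this
  · have h1 : ∫ v in Ioi 0, f v = α / l + β / l ^ 2 :=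
      (setIntegral_congr_fun measurableSet_Ioi fun v hv => hpos v hv).trans
        (integral_affine_mul_exp α β l hl)
    have h2 : ∫ v in Ioi 0, f (-v) = α / k + β / k ^ 2 :=
      (setIntegral_congr_fun measurableSet_Ioi fun v hv => hneg v hv).trans
        (integral_affine_mul_exp α β k hk)
    have h3 := integral_comp_neg_Ioi (0 : ℝ) f
    rw [neg_zero] at h3
    rw [← intervalIntegral.integral_Iic_add_Ioi hJ' hI, ← h3, h1, h2, add_comm]

/-- The rational function `1 / ((x + i y)² (x - a - i y)²)`, with a double pole in each half-plane.
It is the product of the complex derivatives attached to the two Poisson kernels, the second one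
conjugated. -/
noncomputable def doublePoles (a y : ℝ) (x : ℝ) : ℂ := 1 / ((x + y * I) ^ 2 * (x - a - y * I) ^ 2)

/-- The continuous function whose Fourier transform (with kernel `e^{-2πivw}`) is `doublePoles a y`.
It equals `(α + β|v|) e^{2πi(a + iy)v}` for `v ≥ 0` and `(α + β|v|) e^{2πyv}` for `v ≤ 0`, with
`α = 4πi/c³`, `β = (2πi)²/c²` and `c = -(a + 2iy)` the difference of the poles; the `max` in the
exponent merges the two cases. -/
noncomputable def expProfile (a y : ℝ) (v : ℝ) : ℂ :=
  (4 * π * I / (-(a + 2 * y * I)) ^ 3 + (2 * π * I) ^ 2 / (-(a + 2 * y * I)) ^ 2 * |v|)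
    * Complex.exp (-(2 * π * y) * |v| + 2 * π * a * I * (max v 0 : ℝ))

lemma ofReal_add_mul_I_ne_zero {x y : ℝ} (hy : y ≠ 0) : (x + y * I : ℂ) ≠ 0 := by
  intro h0
  have := congrArg Complex.im h0
  simp at this
  exact hy this

lemma continuous_expProfile (a y : ℝ) : Continuous (expProfile a y) := by
  unfold expProfile
  fun_prop

/-- The four terms given by `integral_two_sided` are the partial fraction decomposition of
`doublePoles a y w`. -/
lemma fourierIntegral_expProfile (a y : ℝ) (hy : 0 < y) (w : ℝ) :
    Integrable (fun v : ℝ => Complex.exp (↑(-2 * π * v * w) * I) • expProfile a y v) ∧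
      ∫ v : ℝ, Complex.exp (↑(-2 * π * v * w) * I) • expProfile a y v = doublePoles a y w := by
  have h2 := integral_two_sided (fun v : ℝ => Complex.exp (↑(-2 * π * v * w) * I) • expProfile a y v)
    (4 * π * I / (-(a + 2 * y * I)) ^ 3) ((2 * π * I) ^ 2 / (-(a + 2 * y * I)) ^ 2)
    (2 * π * I * (w - a - y * I)) (-(2 * π * I * (w + y * I))) (by simp; positivity)
    (by simp; positivity) ?_ ?_
  · refine ⟨h2.1, h2.2.trans ?_⟩
    have hT : (2 * π * I : ℂ) ≠ 0 := by simp [Real.pi_ne_zero]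
    have hP : (w + y * I : ℂ) ≠ 0 := ofReal_add_mul_I_ne_zero hy.ne'
    have hQ : (w - a - y * I : ℂ) ≠ 0 := by
      have := ofReal_add_mul_I_ne_zero (x := w - a) (y := -y) (by linarith)
      push_cast at this
      convert this using 1
      ring
    have hc : (-(a + 2 * y * I) : ℂ) ≠ 0 := by
      have := ofReal_add_mul_I_ne_zero (x := a) (y := 2 * y) (by linarith)
      push_cast at this
      exact neg_ne_zero.2 this
    have hcPQ : (-(a + 2 * y * I) : ℂ) = (w - a - y * I) - (w + y * I) := by ring
    have hT4 : (4 * π * I : ℂ) = 2 * (2 * π * I) := by ring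
    rw [doublePoles, hT4]
    rw [hcPQ] at hc ⊢
    generalize (2 * π * I : ℂ) = T at *
    generalize (w + y * I : ℂ) = P at *
    generalize (w - a - y * I : ℂ) = Q at *
    field_simp
    ring
  · intro v hv
    simp only [expProfile, abs_of_pos hv, max_eq_left hv.le, smul_eq_mul]
    rw [mul_left_comm, ← Complex.exp_add]
    congr 2
    push_cast
    linear_combination (-2 * π * y * v) * Complex.I_sq
  · intro v hv
    simp only [expProfile, abs_neg, abs_of_pos hv, max_eq_right (neg_nonpos.2 hv.le), smul_eq_mul]
    rw [mul_left_comm, ← Complex.exp_add]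
    congr 2
    push_cast
    linear_combination -(2 * π * y * v) * Complex.I_sq

lemma integrable_expProfile (a y : ℝ) (hy : 0 < y) : Integrable (expProfile a y) := by
  simpa using (fourierIntegral_expProfile a y hy 0).1

lemma fourier_expProfile (a y : ℝ) (hy : 0 < y) : 𝓕 (expProfile a y) = doublePoles a y := by
  ext w
  rw [Real.fourier_real_eq_integral_exp_smul]
  exact (fourierIntegral_expProfile a y hy w).2

/-- `doublePoles` with a real denominator, from which its imaginary part can be read off. -/
lemma doublePoles_eq (a y x : ℝ) (hy : 0 < y) : doublePoles a y x =
    (x - y * I) ^ 2 * (x - a + y * I) ^ 2 /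
      ((((x ^ 2 + y ^ 2) ^ 2 * ((x - a) ^ 2 + y ^ 2) ^ 2 : ℝ)) : ℂ) := by
  have hP : (x + y * I : ℂ) ≠ 0 := ofReal_add_mul_I_ne_zero hy.ne'
  have hQ : (x - a - y * I : ℂ) ≠ 0 := by
    have := ofReal_add_mul_I_ne_zero (x := x - a) (y := -y) (by linarith)
    push_cast at this
    convert this using 1
    ring
  have hD : ((((x ^ 2 + y ^ 2) ^ 2 * ((x - a) ^ 2 + y ^ 2) ^ 2 : ℝ)) : ℂ) ≠ 0 := by
    rw [Complex.ofReal_ne_zero]; positivity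
  have e1 : (x ^ 2 + y ^ 2 : ℂ) = (x + y * I) * (x - y * I) := by
    linear_combination (y : ℂ) ^ 2 * Complex.I_sq
  have e2 : ((x - a) ^ 2 + y ^ 2 : ℂ) = (x - a + y * I) * (x - a - y * I) := by
    linear_combination (y : ℂ) ^ 2 * Complex.I_sq
  rw [doublePoles, div_eq_div_iff (by positivity) hD]
  push_cast
  rw [e1, e2]
  ring

lemma integrable_doublePoles (a y : ℝ) (hy : 0 < y) : Integrable (doublePoles a y) := by
  have hm : AEStronglyMeasurable (doublePoles a y) volume := by
    unfold doublePoles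
    exact (by fun_prop : Measurable _).aestronglyMeasurable
  refine ((integrable_inv_one_add_sq.const_mul (1 + 1 / y ^ 2)).const_mul (1 / y ^ 2)).mono' hm
    (.of_forall fun x => ?_)
  have n1 : ‖(x + y * I : ℂ)‖ ^ 2 = x ^ 2 + y ^ 2 := by
    rw [Complex.sq_norm, Complex.normSq_add_mul_I]
  have n2 : ‖(x - a - y * I : ℂ)‖ ^ 2 = (x - a) ^ 2 + y ^ 2 := by
    have := Complex.normSq_add_mul_I (x - a) (-y)
    rw [← Complex.sq_norm] at this
    push_cast at this
    rw [neg_sq, neg_mul, ← sub_eq_add_neg] at this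
    exact this
  rw [doublePoles, norm_div, norm_mul, norm_pow, norm_pow, n1, n2, norm_one]
  have b1 : 1 / ((x ^ 2 + y ^ 2) * ((x - a) ^ 2 + y ^ 2)) ≤ 1 / ((x ^ 2 + y ^ 2) * y ^ 2) := by
    gcongr
    nlinarith [sq_nonneg (x - a)]
  refine b1.trans ?_
  have e : 1 / y ^ 2 * ((1 + 1 / y ^ 2) * (1 + x ^ 2)⁻¹) - 1 / ((x ^ 2 + y ^ 2) * y ^ 2)
      = (x ^ 2 + y ^ 4) / (y ^ 4 * (1 + x ^ 2) * (x ^ 2 + y ^ 2)) := by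
    field_simp
    ring
  have : 0 ≤ (x ^ 2 + y ^ 4) / (y ^ 4 * (1 + x ^ 2) * (x ^ 2 + y ^ 2)) := by positivity
  linarith

/-- Fourier inversion: this replaces a residue computation at the two double poles. -/
lemma integral_exp_mul_doublePoles (a y : ℝ) (hy : 0 < y) (v : ℝ) :
    ∫ x : ℝ, Complex.exp (↑(2 * π * (x * v)) * I) * doublePoles a y x = expProfile a y v := by
  have hi := (continuous_expProfile a y).fourierInv_fourier_eq (integrable_expProfile a y hy)
    (by rw [fourier_expProfile a y hy]; exact integrable_doublePoles a y hy)
  rw [fourier_expProfile a y hy] at hi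
  have := congrFun hi v
  rw [Real.fourierInv_eq'] at this
  simpa [mul_comm] using this

/-- Both exponentials in `cos x` contribute equally, because the pole at `a = 2πn` gives
`e^{ia} = 1`. -/
lemma integral_doublePoles_mul_cos (y : ℝ) (hy : 0 < y) (n : ℤ) :
    ∫ x : ℝ, doublePoles (2 * π * n) y x * Real.cos x =
      (4 * π * I / (-(2 * π * n + 2 * y * I)) ^ 3
        + (2 * π * I) ^ 2 / (-(2 * π * n + 2 * y * I)) ^ 2 * (1 / (2 * π))) * Real.exp (-y) := by
  set a : ℝ := 2 * π * n with ha
  have key : ∀ s : ℝ, |s| = 1 →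
      Integrable (fun x : ℝ => Complex.exp (s * x * I) * doublePoles a y x) ∧
      ∫ x : ℝ, Complex.exp (s * x * I) * doublePoles a y x =
      (4 * π * I / (-(2 * π * n + 2 * y * I)) ^ 3
        + (2 * π * I) ^ 2 / (-(2 * π * n + 2 * y * I)) ^ 2 * (1 / (2 * π))) * Real.exp (-y) := by
    intro s hs
    refine ⟨?_, ?_⟩
    · refine (integrable_doublePoles a y hy).bdd_mul (c := 1) (by fun_prop) (.of_forall fun x => ?_)
      rw [← Complex.ofReal_mul, Complex.norm_exp_ofReal_mul_I]
    · have h1 := integral_exp_mul_doublePoles a y hy (s / (2 * π))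
      have e1 : ∀ x : ℝ, 2 * π * (x * (s / (2 * π))) = s * x := fun x => by
        field_simp
      simp only [e1] at h1
      push_cast at h1
      rw [h1, expProfile, abs_div, hs, abs_of_pos Real.two_pi_pos]
      have hexp : Complex.exp (-(2 * π * y) * ((1 / (2 * π) : ℝ) : ℂ)
          + 2 * π * a * I * (max (s / (2 * π)) 0 : ℝ)) = (Real.exp (-y) : ℂ) := by
        have hpi : (π : ℂ) ≠ 0 := by simp [Real.pi_ne_zero]
        rw [Complex.exp_add]
        have e2 : Complex.exp (2 * π * a * I * (max (s / (2 * π)) 0 : ℝ)) = 1 := by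
          rcases eq_or_eq_neg_of_abs_eq hs with rfl | rfl
          · rw [max_eq_left (by positivity), ← Complex.exp_int_mul_two_pi_mul_I n]
            congr 1
            rw [ha]
            push_cast
            field_simp
          · rw [max_eq_right]
            · simp
            · rw [neg_div]; simp; positivity
        rw [e2, mul_one, Complex.ofReal_exp]
        congr 1
        push_cast
        field_simp
      rw [hexp, ha]
      push_cast
      rfl
  obtain ⟨i1, v1⟩ := key 1 (by simp)
  obtain ⟨i2, v2⟩ := key (-1) (by simp)
  have e : ∀ x : ℝ, doublePoles a y x * Real.cos x =
      (1 / 2 : ℂ) * (Complex.exp ((1 : ℝ) * x * I) * doublePoles a y x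
        + Complex.exp ((-1 : ℝ) * x * I) * doublePoles a y x) := by
    intro x
    rw [Complex.ofReal_cos, Complex.cos]
    push_cast
    ring_nf
  simp_rw [e]
  rw [integral_const_mul, integral_add i1 i2, v1, v2]
  ring

lemma deriv_p_snd (n : ℤ) (x y : ℝ) (hy : 0 < y) : deriv (fun t => p n x t) y =
    (1 / π) * ((x - 2 * π * n) ^ 2 - y ^ 2) / ((x - 2 * π * n) ^ 2 + y ^ 2) ^ 2 := by
  have hD : (x - 2 * π * n) ^ 2 + y ^ 2 ≠ 0 := by positivity
  have h1 := ((hasDerivAt_id y).const_mul (1 / π)).div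
    (((hasDerivAt_id y).pow 2).const_add ((x - 2 * π * n) ^ 2)) hD
  refine HasDerivAt.deriv (h1.congr_deriv ?_)
  simp
  field_simp
  ring

lemma deriv_p_fst (n : ℤ) (x y : ℝ) (hy : 0 < y) : deriv (fun s => p n s y) x =
    -(1 / π) * (2 * (x - 2 * π * n) * y) / ((x - 2 * π * n) ^ 2 + y ^ 2) ^ 2 := by
  have hD : (x - 2 * π * n) ^ 2 + y ^ 2 ≠ 0 := by positivity
  have h1 := (hasDerivAt_const x (1 / π * y)).div
    ((((hasDerivAt_id x).sub_const (2 * π * n)).pow 2).add_const (y ^ 2)) hD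
  refine HasDerivAt.deriv (h1.congr_deriv ?_)
  simp
  field_simp

/-- Cauchy-Riemann: `p n = -(1/π) Im (1 / (z - 2πn))`, so that
`H∇p₀ · ∇pₙ = (1/π²) Im (f₀' * conj fₙ')` with `fₙ = 1 / (z - 2πn)` and `z = x + iy`. -/
lemma integrand_eq (n : ℤ) (x y : ℝ) (hy : 0 < y) :
    (-(deriv (fun t => p 0 x t) y) * deriv (fun s => p n s y) x
      + deriv (fun s => p 0 s y) x * deriv (fun t => p n x t) y) * Real.cos x
    = (1 / π ^ 2) * (doublePoles (2 * π * n) y x * Real.cos x).im := by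
  rw [deriv_p_snd 0 x y hy, deriv_p_snd n x y hy, deriv_p_fst 0 x y hy, deriv_p_fst n x y hy,
    Complex.im_mul_ofReal, doublePoles_eq _ _ _ hy, Complex.div_ofReal_im]
  generalize 2 * π * (n : ℝ) = a
  have e : ((x - y * I : ℂ) ^ 2 * (x - a + y * I) ^ 2).im =
      2 * (x - a) * y * (x ^ 2 - y ^ 2) - 2 * x * y * ((x - a) ^ 2 - y ^ 2) := by
    simp [pow_two]
    ring
  rw [e]
  simp only [Int.cast_zero, mul_zero, sub_zero]
  field_simp
  ring

theorem integral_Hgrad_p0_dot_grad_pn_cos (y : ℝ) (hy : 0 < y) (n : ℤ) (hn : n ≠ 0) :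
    2 * π * ∫ x : ℝ,
        (-(deriv (fun t => p 0 x t) y) * deriv (fun s => p n s y) x
          + deriv (fun s => p 0 s y) x * deriv (fun t => p n x t) y) * Real.cos x
      = π * n * (π ^ 2 * n ^ 2 * (2 * y - 1) + y ^ 2 * (2 * y + 3))
          / (y ^ 2 + π ^ 2 * n ^ 2) ^ 3 * Real.exp (-y) := by
  simp_rw [integrand_eq n _ y hy]
  have hint : Integrable fun x : ℝ => doublePoles (2 * π * n) y x * Real.cos x := by
    refine (integrable_doublePoles _ y hy).mul_bdd (c := 1) (by fun_prop) (.of_forall fun x => ?_)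
    rw [Complex.norm_real]
    exact Real.abs_cos_le_one x
  have him : ∫ x : ℝ, (doublePoles (2 * π * n) y x * Real.cos x).im =
      (∫ x : ℝ, doublePoles (2 * π * n) y x * Real.cos x).im := integral_im hint
  rw [integral_const_mul, him, integral_doublePoles_mul_cos y hy n, Complex.im_mul_ofReal]
  set A : ℝ := π * n with hA
  have hd : (A + y * I : ℂ) ≠ 0 := ofReal_add_mul_I_ne_zero hy.ne'
  have hpi : (π : ℂ) ≠ 0 := by simp [Real.pi_ne_zero]
  have hD : ((((y ^ 2 + A ^ 2) ^ 3 : ℝ)) : ℂ) ≠ 0 := by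
    rw [Complex.ofReal_ne_zero]; positivity
  have e1 : (2 * π * n + 2 * y * I : ℂ) = 2 * (A + y * I) := by
    rw [hA]; push_cast; ring
  have e2 : (y ^ 2 + A ^ 2 : ℂ) = (A + y * I) * (A - y * I) := by
    linear_combination (y : ℂ) ^ 2 * Complex.I_sq
  have e3 : (4 * π * I / (-(2 * π * n + 2 * y * I)) ^ 3
        + (2 * π * I) ^ 2 / (-(2 * π * n + 2 * y * I)) ^ 2 * (1 / (2 * π)) : ℂ) =
      ((-(π / 2) : ℝ) : ℂ) * ((A + (y + 1) * I) * (A - y * I) ^ 3) / (((y ^ 2 + A ^ 2) ^ 3 : ℝ) : ℂ) := by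
    have hd' : (A - y * I : ℂ) ≠ 0 := by
      intro h0
      apply hD
      push_cast
      rw [e2, h0]
      simp
    rw [e1]
    push_cast
    -- After this step only `A ± iy` occur, and the identity is one between rational functions.
    have e5 : (A + (y + 1) * I : ℂ) = (A + y * I) + I := by ring
    rw [e2, e5, mul_pow (2 * π : ℂ), Complex.I_sq]
    generalize (A + y * I : ℂ) = P at *
    generalize (A - y * I : ℂ) = Q at *
    field_simp
    ring
  have e4 : ((A + (y + 1) * I : ℂ) * (A - y * I) ^ 3).im =
      -(A * (A ^ 2 * (2 * y - 1) + y ^ 2 * (2 * y + 3))) := by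
    simp [pow_succ]
    ring
  rw [e3, Complex.div_ofReal_im, Complex.im_ofReal_mul, e4, ← mul_pow, ← hA]
  field_simp
end

section
/- For every y > 0 and every nonzero integer n, 2π·∫_{−∞}^{∞} pₙ(x,y)·(−∂_y p₀(x,y))·sin(x) dx = (1/(2πn))·y²/(y² + π²n²)·e^{−y}. -/
/-!
Replace `sin x` by `exp (i x)`: on the real line the integrand is `1 / π ^ 2` times the imaginary
part of `φ x / ((x - α) * (x - β) ^ 2)`, where `α = 2 π n + i y`, `β = i y` and `φ` is holomorphic
and bounded on the closed upper half-plane (`integrand_eq_im`, `regularPart_isBigO`). By residues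
its integral is `2 π i` times the second divided difference of `φ` at `α, β, β`, and the real part
of that divided difference is computed explicitly (`divDiff_regularPart_re`); `α ≠ β` because
`n ≠ 0`, and `exp (i α) = exp (i β) = exp (-y)`.

The residue formula `integral_kernel` is deduced from Cauchy's theorem for rectangles, which gives
`∫ f = 0` for `f` holomorphic on a neighbourhood of the closed upper half-plane with
`f z = O(1 / z ^ 2)` there (`integral_eq_zero_of_upper`). The poles are removed by Newton
interpolation of `φ` at `β, β, α`: the terms subtracted are rational functions that decay like
`1 / z ^ 2`, with all poles in the upper half-plane (integral zero by reflection), and a multiple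
of the Poisson kernel at `α`.
-/

open Real MeasureTheory

section HalfPlane

open Filter Asymptotics Topology

/-! ### Integrals over the real line of functions holomorphic in a half-plane -/

/-- Infinity within the closed upper half-plane. -/
noncomputable def upperInfty : Filter ℂ := cocompact ℂ ⊓ 𝓟 {z : ℂ | 0 ≤ z.im}

lemma tendsto_ofReal_upperInfty : Tendsto (fun x : ℝ => (x : ℂ)) (cocompact ℝ) upperInfty := by
  refine tendsto_inf.2 ⟨Complex.isometry_ofReal.isClosedEmbedding.tendsto_cocompact, ?_⟩
  exact tendsto_principal.2 (Eventually.of_forall fun x => by simp)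

lemma isBigO_inv_sub (w : ℂ) : (fun z : ℂ => (z - w)⁻¹) =O[upperInfty] (fun z => z⁻¹) := by
  refine IsBigO.of_bound 2 ?_
  have h1 : ∀ᶠ z : ℂ in upperInfty, 2 * ‖w‖ + 1 ≤ ‖z‖ :=
    ((tendsto_norm_cocompact_atTop (E := ℂ)).mono_left inf_le_left).eventually_ge_atTop _
  filter_upwards [h1] with z hz
  have h2 : ‖z‖ - ‖w‖ ≤ ‖z - w‖ := norm_sub_norm_le z w
  have h0 := norm_nonneg w
  rw [norm_inv, norm_inv, ← div_eq_mul_inv, inv_eq_one_div,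
    div_le_div_iff₀ (by linarith) (by linarith)]
  linarith

lemma isBigO_inv_one : (fun z : ℂ => z⁻¹) =O[upperInfty] (fun _ => (1 : ℂ)) := by
  refine IsBigO.of_bound 1 ?_
  have h1 : ∀ᶠ z : ℂ in upperInfty, 1 ≤ ‖z‖ :=
    ((tendsto_norm_cocompact_atTop (E := ℂ)).mono_left inf_le_left).eventually_ge_atTop _
  filter_upwards [h1] with z hz
  simpa using inv_le_one_of_one_le₀ hz

lemma integrable_of_isBigO_upperInfty {f : ℂ → ℂ} (hc : Continuous fun x : ℝ => f x)
    (hO : f =O[upperInfty] fun z => z⁻¹ ^ 2) : Integrable fun x : ℝ => f x := by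
  refine hc.locallyIntegrable.integrable_of_isBigO_cocompact (g := fun x : ℝ => (1 + x ^ 2)⁻¹)
    ((hO.comp_tendsto tendsto_ofReal_upperInfty).trans ?_)
    (integrable_inv_one_add_sq.integrableAtFilter _)
  refine IsBigO.of_bound 2 ?_
  filter_upwards [(tendsto_norm_cocompact_atTop (E := ℝ)).eventually_ge_atTop 1] with x hx
  have h1 : 1 ≤ x ^ 2 := by
    rw [← sq_abs]
    rw [Real.norm_eq_abs] at hx
    nlinarith
  have h2 : ‖(1 + x ^ 2)⁻¹‖ = (1 + x ^ 2)⁻¹ := by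
    rw [Real.norm_eq_abs, abs_of_pos]; positivity
  rw [h2]
  simp only [Function.comp, norm_pow, norm_inv, Complex.norm_real, Real.norm_eq_abs, inv_pow,
    sq_abs]
  rw [← div_eq_mul_inv, inv_eq_one_div, div_le_div_iff₀ (by linarith) (by linarith)]
  linarith

lemma continuous_restrict_real {f : ℂ → ℂ} {ε : ℝ} (hε : 0 < ε)
    (hf : DifferentiableOn ℂ f {z | -ε < z.im}) : Continuous fun x : ℝ => f x :=
  hf.continuousOn.comp_continuous Complex.continuous_ofReal fun x => by simpa using hε

/-- Cauchy's theorem for the upper half-plane: the contour is the boundary of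
`[-R, R] × [0, R]`, whose three non-real sides contribute `O(1 / R)`. -/
lemma integral_eq_zero_of_upper {f : ℂ → ℂ} {ε : ℝ} (hε : 0 < ε)
    (hf : DifferentiableOn ℂ f {z | -ε < z.im})
    (hO : f =O[upperInfty] fun z => z⁻¹ ^ 2) : ∫ x : ℝ, f x = 0 := by
  have hint := integrable_of_isBigO_upperInfty (continuous_restrict_real hε hf) hO
  have hlim := intervalIntegral_tendsto_integral hint tendsto_neg_atTop_atBot tendsto_id
  refine tendsto_nhds_unique hlim ?_
  obtain ⟨C, hC⟩ := hO.bound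
  rw [upperInfty, eventually_inf_principal, ← Metric.cobounded_eq_cocompact,
    ← comap_norm_atTop, eventually_comap] at hC
  obtain ⟨R₀, hR₀⟩ := eventually_atTop.1 hC
  have hbd : ∀ R : ℝ, R₀ ≤ R → 0 < R → ∀ z : ℂ, 0 ≤ z.im → R ≤ ‖z‖ → ‖f z‖ ≤ |C| / R ^ 2 := by
    intro R h1 h2 z h3 h4
    refine (hR₀ ‖z‖ (h1.trans h4) z rfl h3).trans ?_
    rw [norm_pow, norm_inv, inv_pow, ← div_eq_mul_inv]
    gcongr
    exact le_abs_self C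
  have hrate : Tendsto (fun R : ℝ => 4 * |C| * R⁻¹) atTop (𝓝 0) := by
    simpa using tendsto_inv_atTop_zero.const_mul (4 * |C|)
  refine squeeze_zero_norm' ?_ hrate
  filter_upwards [eventually_ge_atTop R₀, eventually_gt_atTop 0] with R h1 h2
  have hrect := Complex.integral_boundary_rect_eq_zero_of_differentiableOn f (-R : ℂ)
    (R + R * Complex.I) (hf.mono ?_)
  · simp only [Complex.neg_re, Complex.ofReal_re, Complex.add_re, Complex.mul_re, Complex.I_re,
      mul_zero, Complex.ofReal_im, Complex.I_im, mul_one, sub_self, add_zero, Complex.neg_im,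
      neg_zero, Complex.add_im, Complex.mul_im, zero_add, Complex.ofReal_zero, zero_mul,
      smul_eq_mul] at hrect
    have hre : ∀ x y : ℝ, ((x : ℂ) + y * Complex.I).re = x := by simp
    have him : ∀ x y : ℝ, ((x : ℂ) + y * Complex.I).im = y := by simp
    have e1 : ‖∫ x : ℝ in (-R)..R, f (x + R * Complex.I)‖ ≤ |C| / R ^ 2 * |R - -R| := by
      refine intervalIntegral.norm_integral_le_of_norm_le_const fun x _ => ?_
      refine hbd R h1 h2 _ (by rw [him]; exact h2.le) ?_
      simpa only [him, abs_of_pos h2] using Complex.abs_im_le_norm ((x : ℂ) + R * Complex.I)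
    have e2 : ‖∫ y : ℝ in (0 : ℝ)..R, f (R + y * Complex.I)‖ ≤ |C| / R ^ 2 * |R - 0| := by
      refine intervalIntegral.norm_integral_le_of_norm_le_const fun x hx => ?_
      rw [Set.uIoc_of_le h2.le] at hx
      refine hbd R h1 h2 _ (by rw [him]; exact hx.1.le) ?_
      simpa only [hre, abs_of_pos h2] using Complex.abs_re_le_norm ((R : ℂ) + x * Complex.I)
    have e3 : ‖∫ y : ℝ in (0 : ℝ)..R, f (((-R : ℝ) : ℂ) + y * Complex.I)‖
        ≤ |C| / R ^ 2 * |R - 0| := by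
      refine intervalIntegral.norm_integral_le_of_norm_le_const fun x hx => ?_
      rw [Set.uIoc_of_le h2.le] at hx
      refine hbd R h1 h2 _ (by rw [him]; exact hx.1.le) ?_
      simpa only [hre, abs_neg, abs_of_pos h2] using
        Complex.abs_re_le_norm (((-R : ℝ) : ℂ) + x * Complex.I)
    have hval : ∫ x : ℝ in (-R)..R, f x = (∫ x : ℝ in (-R)..R, f (x + R * Complex.I))
        - Complex.I * (∫ y : ℝ in (0 : ℝ)..R, f (R + y * Complex.I))
        + Complex.I * ∫ y : ℝ in (0 : ℝ)..R, f (((-R : ℝ) : ℂ) + y * Complex.I) := by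
      linear_combination hrect
    simp only [id]
    rw [hval]
    refine (norm_add_le _ _).trans ((add_le_add_left (norm_sub_le _ _) _).trans ?_)
    rw [norm_mul, norm_mul, Complex.norm_I, one_mul, one_mul]
    refine (add_le_add (add_le_add e1 e2) e3).trans (le_of_eq ?_)
    rw [sub_neg_eq_add, sub_zero, abs_of_pos h2, abs_of_pos (by linarith : 0 < R + R)]
    field_simp
    ring
  · intro z hz
    have := hz.2
    simp only [Complex.neg_im, Complex.ofReal_im, neg_zero, Complex.add_im, Complex.mul_im,
      Complex.ofReal_re, Complex.I_im, mul_one, Complex.I_re, mul_zero, add_zero, zero_add,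
      Set.mem_preimage, Set.uIcc_of_le h2.le] at this
    show -ε < z.im
    linarith [this.1]

/-- If `im w > 0`, then `x - w` does not vanish on the real line. -/
lemma ofReal_sub_ne_zero {w : ℂ} (hw : 0 < w.im) (x : ℝ) : (x : ℂ) - w ≠ 0 := by
  intro h
  have := congrArg Complex.im h
  simp at this
  linarith

/-- A rational function decaying like `1 / x ^ 2` with all its poles in the upper half-plane has
integral zero: after `x ↦ -x` the poles lie in the lower half-plane. -/
lemma integral_inv_mul_inv {α β : ℂ} (hα : 0 < α.im) (hβ : 0 < β.im) (m : ℕ) :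
    ∫ x : ℝ, ((x : ℂ) - α)⁻¹ * ((x : ℂ) - β)⁻¹ ^ (m + 1) = 0 := by
  rw [← integral_neg_eq_self]
  have hε : 0 < min α.im β.im := lt_min hα hβ
  have key := integral_eq_zero_of_upper hε
    (f := fun z => (z - -α)⁻¹ * (z - -β)⁻¹ ^ (m + 1)) ?_ ?_
  · rw [← mul_zero ((-1 : ℂ) ^ (m + 2)), ← key, ← integral_const_mul]
    congr 1
    funext x
    have h (w : ℂ) : ((-x : ℝ) : ℂ) - w = -((x : ℂ) - -w) := by push_cast; ring
    rw [h, h, inv_neg, inv_neg, neg_pow]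
    ring
  · have h : ∀ w : ℂ, min α.im β.im ≤ w.im →
        DifferentiableOn ℂ (fun z => (z - -w)⁻¹) {z : ℂ | -min α.im β.im < z.im} := by
      intro w hw
      refine (differentiableOn_id.sub_const _).inv fun z hz h0 => ?_
      have h1 := congrArg Complex.im h0
      simp at h1
      have h2 : -min α.im β.im < z.im := hz
      linarith
    exact (h α (min_le_left _ _)).mul ((h β (min_le_right _ _)).pow _)
  · have h := (isBigO_inv_sub (-α)).mul ((isBigO_inv_sub (-β)).mul
      (((isBigO_inv_sub (-β)).trans isBigO_inv_one).pow m))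
    refine (h.congr (fun z => by ring) fun z => ?_)
    simp; ring

/-- The bracket equals `2 i b / ((x - a) ^ 2 + b ^ 2)`, that is `2 π i` times the Poisson kernel
with pole `a` at height `b`. -/
lemma integral_inv_sub_inv_conj {a b : ℝ} (hb : 0 < b) :
    ∫ x : ℝ, (((x : ℂ) - (a + b * Complex.I))⁻¹ - ((x : ℂ) - (a - b * Complex.I))⁻¹)
      = 2 * π * Complex.I := by
  have h1 : ∀ x : ℝ, (((x : ℂ) - (a + b * Complex.I))⁻¹ - ((x : ℂ) - (a - b * Complex.I))⁻¹)
      = (2 * Complex.I / b) * (((1 + (b⁻¹ * (x - a)) ^ 2)⁻¹ : ℝ) : ℂ) := by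
    intro x
    have hα : (x : ℂ) - (a + b * Complex.I) ≠ 0 := ofReal_sub_ne_zero (by simpa using hb) x
    have hα' : (x : ℂ) - (a - b * Complex.I) ≠ 0 := by
      intro h
      have := congrArg Complex.im h
      simp at this
      linarith
    have hb' : (b : ℂ) ≠ 0 := by exact_mod_cast hb.ne'
    have hq : 1 + ((b : ℂ)⁻¹ * ((x : ℂ) - a)) ^ 2
        = ((x : ℂ) - (a + b * Complex.I)) * ((x : ℂ) - (a - b * Complex.I)) / b ^ 2 := by
      field_simp
      linear_combination (b : ℂ) ^ 2 * Complex.I_sq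
    push_cast
    rw [hq]
    field_simp
    ring
  simp_rw [h1]
  rw [integral_const_mul, integral_complex_ofReal,
    integral_sub_right_eq_self (fun x : ℝ => (1 + (b⁻¹ * x) ^ 2)⁻¹) a,
    Measure.integral_comp_mul_left (fun x : ℝ => (1 + x ^ 2)⁻¹), integral_univ_inv_one_add_sq]
  have hb' : (b : ℂ) ≠ 0 := by exact_mod_cast hb.ne'
  rw [inv_inv, abs_of_pos hb, smul_eq_mul]
  push_cast
  field_simp

lemma isBigO_kernel {φ : ℂ → ℂ} (hb : φ =O[upperInfty] fun _ => (1 : ℂ)) (α β : ℂ) :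
    (fun z => φ z * (z - α)⁻¹ * (z - β)⁻¹ ^ 2) =O[upperInfty] fun z => z⁻¹ ^ 2 := by
  have h := (hb.mul ((isBigO_inv_sub β).trans isBigO_inv_one)).mul
    ((isBigO_inv_sub α).mul (isBigO_inv_sub β))
  exact h.congr (fun z => by ring) fun z => by ring

lemma isBigO_inv_mul_inv (α β : ℂ) :
    (fun z : ℂ => (z - α)⁻¹ * (z - β)⁻¹) =O[upperInfty] fun z => z⁻¹ ^ 2 :=
  ((isBigO_inv_sub α).mul (isBigO_inv_sub β)).congr (fun _ => rfl) fun z => by ring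

lemma continuous_inv_sub {w : ℂ} (h : ∀ x : ℝ, (x : ℂ) - w ≠ 0) :
    Continuous fun x : ℝ => ((x : ℂ) - w)⁻¹ :=
  (Complex.continuous_ofReal.sub continuous_const).inv₀ h

/-- The second divided difference of `φ` at the nodes `α, β, β`, for `α ≠ β`: the sum of the
residues at `α` and `β` of `φ z / ((z - α) * (z - β) ^ 2)`. -/
noncomputable def divDiff (φ : ℂ → ℂ) (α β : ℂ) : ℂ :=
  (φ α - φ β - (α - β) * deriv φ β) / (α - β) ^ 2

lemma integrable_kernel {φ : ℂ → ℂ} {ε : ℝ} (hε : 0 < ε)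
    (hφ : DifferentiableOn ℂ φ {z | -ε < z.im}) (hb : φ =O[upperInfty] fun _ => (1 : ℂ))
    {α β : ℂ} (hα : 0 < α.im) (hβ : 0 < β.im) :
    Integrable fun x : ℝ => φ x * ((x : ℂ) - α)⁻¹ * ((x : ℂ) - β)⁻¹ ^ 2 :=
  integrable_of_isBigO_upperInfty (f := fun z => φ z * (z - α)⁻¹ * (z - β)⁻¹ ^ 2)
    (((continuous_restrict_real hε hφ).mul (continuous_inv_sub (ofReal_sub_ne_zero hα))).mul
      ((continuous_inv_sub (ofReal_sub_ne_zero hβ)).pow 2)) (isBigO_kernel hb α β)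

/-- Residue formula for a simple pole `α = a + i b` and a double pole `β`. The Newton
interpolation remainder `d₃` of `φ` at the nodes `β, β, α` is holomorphic; adding
`divDiff φ α β / (z - conj α)` turns it into a holomorphic function with decay `1 / z ^ 2`. -/
lemma integral_kernel {φ : ℂ → ℂ} {ε : ℝ} (hε : 0 < ε)
    (hφ : DifferentiableOn ℂ φ {z | -ε < z.im}) (hb : φ =O[upperInfty] fun _ => (1 : ℂ))
    {a b : ℝ} (hb0 : 0 < b) (hεb : ε ≤ b) {β : ℂ} (hβ : 0 < β.im)
    (hne : (a + b * Complex.I : ℂ) ≠ β) :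
    ∫ x : ℝ, φ x * ((x : ℂ) - (a + b * Complex.I))⁻¹ * ((x : ℂ) - β)⁻¹ ^ 2
      = 2 * π * Complex.I * divDiff φ (a + b * Complex.I) β := by
  set α : ℂ := a + b * Complex.I with hαdef
  set α' : ℂ := a - b * Complex.I with hα'def
  have hα : 0 < α.im := by simpa [hαdef] using hb0
  have hα'im : α'.im = -b := by simp [hα'def]
  set U : Set ℂ := {z | -ε < z.im} with hU
  have hUo : IsOpen U := isOpen_lt continuous_const Complex.continuous_im
  have hαU : U ∈ 𝓝 α := hUo.mem_nhds (by show -ε < α.im; linarith)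
  have hβU : U ∈ 𝓝 β := hUo.mem_nhds (by show -ε < β.im; linarith)
  set d₁ := dslope φ β with hd₁
  set d₂ := dslope d₁ β with hd₂
  set d₃ := dslope d₂ α with hd₃
  have hd₃' : DifferentiableOn ℂ d₃ U :=
    (Complex.differentiableOn_dslope hαU).2 ((Complex.differentiableOn_dslope hβU).2
      ((Complex.differentiableOn_dslope hβU).2 hφ))
  have s1 : ∀ z, (z - β) * d₁ z = φ z - φ β := fun z => sub_smul_dslope φ β z
  have s2 : ∀ z, (z - β) * d₂ z = d₁ z - d₁ β := fun z => sub_smul_dslope d₁ β z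
  have s3 : ∀ z, (z - α) * d₃ z = d₂ z - d₂ α := fun z => sub_smul_dslope d₂ α z
  have hd₁β : d₁ β = deriv φ β := dslope_same φ β
  have hne' : α - β ≠ 0 := sub_ne_zero.2 hne
  have hD : d₂ α = divDiff φ α β := by
    rw [divDiff, eq_div_iff (pow_ne_zero 2 hne'), ← hd₁β]
    linear_combination (α - β) * s2 α + s1 α
  rw [← hD]
  set D := d₂ α with hDdef
  set c₀ := φ β
  set c₁ := d₁ β
  -- The lower terms `c₀`, `c₁` have poles only at `α, β`, and the last bracket is the kernel of
  -- `integral_inv_sub_inv_conj`; each is integrable, unlike `D / (z - α)` alone.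
  have hdec : ∀ z, z ≠ α → z ≠ β → d₃ z + D * (z - α')⁻¹
      = φ z * (z - α)⁻¹ * (z - β)⁻¹ ^ 2 - (c₀ * ((z - α)⁻¹ * (z - β)⁻¹ ^ (1 + 1))
        + c₁ * ((z - α)⁻¹ * (z - β)⁻¹ ^ (0 + 1))) - D * ((z - α)⁻¹ - (z - α')⁻¹) := by
    intro z h1 h2
    have h1' : z - α ≠ 0 := sub_ne_zero.2 h1
    have h2' : z - β ≠ 0 := sub_ne_zero.2 h2
    have : φ z = c₀ + (z - β) * c₁ + (z - β) ^ 2 * (D + (z - α) * d₃ z) := by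
      linear_combination -s1 z - (z - β) * s2 z - (z - β) ^ 2 * s3 z
    rw [this]
    have e1 := mul_inv_cancel₀ h1'
    have e2 := mul_inv_cancel₀ h2'
    generalize (z - α')⁻¹ = t
    generalize (z - α)⁻¹ = p at *
    generalize (z - β)⁻¹ = q at *
    linear_combination (-(c₁ * p * q) - ((z - β) * q + 1) * (D * p + (z - α) * p * d₃ z)) * e2
      - d₃ z * e1
  have hrα : ∀ x : ℝ, (x : ℂ) ≠ α := fun x => sub_ne_zero.1 (ofReal_sub_ne_zero hα x)
  have hrβ : ∀ x : ℝ, (x : ℂ) ≠ β := fun x => sub_ne_zero.1 (ofReal_sub_ne_zero hβ x)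
  have hrα' : ∀ x : ℝ, (x : ℂ) - α' ≠ 0 := by
    intro x h
    have := congrArg Complex.im h
    rw [Complex.sub_im, hα'im, Complex.ofReal_im, Complex.zero_im] at this
    linarith
  have O1 := isBigO_kernel hb α β
  have Om : ∀ m : ℕ, (fun z : ℂ => (z - α)⁻¹ * (z - β)⁻¹ ^ (m + 1)) =O[upperInfty]
      fun z => z⁻¹ ^ 2 := by
    intro m
    have h := (isBigO_inv_mul_inv α β).mul (((isBigO_inv_sub β).trans isBigO_inv_one).pow m)
    exact h.congr (fun z => by ring) fun z => by simp
  have O3 : (fun z : ℂ => (z - α)⁻¹ - (z - α')⁻¹) =O[upperInfty] fun z => z⁻¹ ^ 2 := by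
    refine ((isBigO_inv_mul_inv α α').const_mul_left (α - α')).congr' ?_ EventuallyEq.rfl
    have h1 : ∀ᶠ z : ℂ in upperInfty, ‖α‖ + ‖α'‖ + 1 ≤ ‖z‖ :=
      ((tendsto_norm_cocompact_atTop (E := ℂ)).mono_left inf_le_left).eventually_ge_atTop _
    filter_upwards [h1] with z hz
    have h2 : z - α ≠ 0 := by
      intro h; rw [sub_eq_zero.1 h] at hz; linarith [norm_nonneg α']
    have h3 : z - α' ≠ 0 := by
      intro h; rw [sub_eq_zero.1 h] at hz; linarith [norm_nonneg α]
    field_simp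
    ring
  have I1 := integrable_kernel hε hφ hb hα hβ
  have Im : ∀ m : ℕ, Integrable fun x : ℝ => ((x : ℂ) - α)⁻¹ * ((x : ℂ) - β)⁻¹ ^ (m + 1) :=
    fun m => integrable_of_isBigO_upperInfty
      ((continuous_inv_sub (ofReal_sub_ne_zero hα)).mul
        ((continuous_inv_sub (ofReal_sub_ne_zero hβ)).pow _)) (Om m)
  have I3 : Integrable fun x : ℝ => ((x : ℂ) - α)⁻¹ - ((x : ℂ) - α')⁻¹ :=
    integrable_of_isBigO_upperInfty
      ((continuous_inv_sub (ofReal_sub_ne_zero hα)).sub (continuous_inv_sub hrα')) O3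
  have hzero := integral_eq_zero_of_upper hε (f := fun z => d₃ z + D * (z - α')⁻¹) ?_ ?_
  · have hfun : (fun x : ℝ => d₃ x + D * ((x : ℂ) - α')⁻¹) = _ :=
      funext fun x : ℝ => hdec x (hrα x) (hrβ x)
    have I2 : Integrable fun x : ℝ => c₀ * (((x : ℂ) - α)⁻¹ * ((x : ℂ) - β)⁻¹ ^ (1 + 1))
        + c₁ * (((x : ℂ) - α)⁻¹ * ((x : ℂ) - β)⁻¹ ^ (0 + 1)) :=
      ((Im 1).const_mul c₀).add ((Im 0).const_mul c₁)
    have I12 : Integrable fun x : ℝ => φ x * ((x : ℂ) - α)⁻¹ * ((x : ℂ) - β)⁻¹ ^ 2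
        - (c₀ * (((x : ℂ) - α)⁻¹ * ((x : ℂ) - β)⁻¹ ^ (1 + 1))
        + c₁ * (((x : ℂ) - α)⁻¹ * ((x : ℂ) - β)⁻¹ ^ (0 + 1))) := I1.sub I2
    rw [hfun, integral_sub I12 (I3.const_mul D), integral_sub I1 I2,
      integral_add ((Im 1).const_mul c₀) ((Im 0).const_mul c₁), integral_const_mul,
      integral_const_mul, integral_const_mul, integral_inv_mul_inv hα hβ,
      integral_inv_mul_inv hα hβ, integral_inv_sub_inv_conj hb0] at hzero
    linear_combination hzero
  · refine hd₃'.add (((differentiableOn_id.sub_const _).inv fun z hz h0 => ?_).const_mul D)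
    have h1 := congrArg Complex.im h0
    simp only [Complex.sub_im, hα'im, Complex.zero_im] at h1
    have h2 : -ε < z.im := hz
    linarith
  · refine ((O1.sub (((Om 1).const_mul_left c₀).add ((Om 0).const_mul_left c₁))).sub
      (O3.const_mul_left D)).congr' ?_ EventuallyEq.rfl
    have h1 : ∀ᶠ z : ℂ in upperInfty, ‖α‖ + ‖β‖ + 1 ≤ ‖z‖ :=
      ((tendsto_norm_cocompact_atTop (E := ℂ)).mono_left inf_le_left).eventually_ge_atTop _
    filter_upwards [h1] with z hz
    refine (hdec z ?_ ?_).symm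
    · rintro rfl; linarith [norm_nonneg β]
    · rintro rfl; linarith [norm_nonneg α]

end HalfPlane

/-! ### The integrand as the imaginary part of a meromorphic function -/

/-- Let `α = a + i y` and `β = i y`. Up to the factor `1 / π ^ 2`, the integrand with `sin x`
replaced by `exp (i x)` is `regularPart a y x / ((x - α) * (x - β) ^ 2)`; the poles of
`regularPart a y` are `a - i y` and `-i y`, in the lower half-plane. -/
noncomputable def regularPart (a y : ℝ) (z : ℂ) : ℂ :=
  Complex.exp (Complex.I * z) * (y * (y ^ 2 - z ^ 2)) * (z - (a - y * Complex.I))⁻¹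
    * (z + y * Complex.I)⁻¹ ^ 2

lemma regularPart_hasDerivAt {a y : ℝ} {z : ℂ} (h1 : z - (a - y * Complex.I) ≠ 0)
    (h2 : z + y * Complex.I ≠ 0) :
    HasDerivAt (regularPart a y)
      (Complex.exp (Complex.I * z) * y * (z - (a - y * Complex.I))⁻¹ * (z + y * Complex.I)⁻¹ ^ 2
        * ((y ^ 2 - z ^ 2) * (Complex.I - (z - (a - y * Complex.I))⁻¹
          - 2 * (z + y * Complex.I)⁻¹) - 2 * z)) z := by
  have d1 : HasDerivAt (fun z : ℂ => Complex.exp (Complex.I * z))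
      (Complex.exp (Complex.I * z) * (Complex.I * 1)) z :=
    ((hasDerivAt_id z).const_mul Complex.I).cexp
  have d2 := (((hasDerivAt_id z).pow 2).const_sub ((y : ℂ) ^ 2)).const_mul (y : ℂ)
  have d3 := ((hasDerivAt_id z).sub_const (a - y * Complex.I : ℂ)).inv h1
  have d4 := (((hasDerivAt_id z).add_const (y * Complex.I : ℂ)).inv h2).pow 2
  refine (show HasDerivAt (regularPart a y) _ z from
    ((d1.mul d2).mul d3).mul d4).congr_deriv ?_
  simp [div_eq_mul_inv]
  simp only [← inv_pow]
  ring

lemma regularPart_differentiableOn {a y : ℝ} :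
    DifferentiableOn ℂ (regularPart a y) {z | -y < z.im} := by
  intro z hz
  have hz' : -y < z.im := hz
  refine (regularPart_hasDerivAt (fun h => ?_) (fun h => ?_)).differentiableAt.differentiableWithinAt
  · have := congrArg Complex.im h
    simp at this
    linarith
  · have := congrArg Complex.im h
    simp at this
    linarith

open Asymptotics Filter in
/-- In the closed upper half-plane `|exp (i z)| ≤ 1`, `|z - (a - i y)| ≥ y` and
`|z + i y| ^ 2 ≥ |z| ^ 2 + y ^ 2 ≥ |y ^ 2 - z ^ 2|`. -/
lemma regularPart_isBigO {a y : ℝ} (hy : 0 < y) :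
    regularPart a y =O[upperInfty] fun _ => (1 : ℂ) := by
  refine IsBigO.of_bound 1 ?_
  have hmem : ∀ᶠ z : ℂ in upperInfty, 0 ≤ z.im :=
    (inf_le_right : upperInfty ≤ _) (mem_principal_self _)
  filter_upwards [hmem] with z hz
  rw [regularPart]
  simp only [norm_mul, norm_pow, norm_inv, norm_one, mul_one, Complex.norm_real,
    Real.norm_eq_abs, abs_of_pos hy]
  have h1 : ‖Complex.exp (Complex.I * z)‖ ≤ 1 := by
    rw [Complex.norm_exp, Real.exp_le_one_iff]
    simpa using hz
  have h2 : y ≤ ‖z - (a - y * Complex.I)‖ := by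
    refine le_trans ?_ (Complex.abs_im_le_norm _)
    refine le_trans ?_ (le_abs_self _)
    simpa using hz
  have h3 : ‖z‖ ^ 2 + y ^ 2 ≤ ‖z + y * Complex.I‖ ^ 2 := by
    rw [← Complex.normSq_eq_norm_sq, ← Complex.normSq_eq_norm_sq, Complex.normSq_apply,
      Complex.normSq_apply]
    simp
    nlinarith [mul_nonneg hz hy.le]
  have h4 : ‖(y : ℂ) ^ 2 - z ^ 2‖ ≤ ‖z‖ ^ 2 + y ^ 2 := by
    refine (norm_sub_le _ _).trans (le_of_eq ?_)
    rw [norm_pow, norm_pow, Complex.norm_real, Real.norm_eq_abs, sq_abs, add_comm]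
  have h5 : 0 < ‖z‖ ^ 2 + y ^ 2 := by positivity
  have h6 : y * ‖z - (a - y * Complex.I)‖⁻¹ ≤ 1 := by
    rw [← div_eq_mul_inv]; exact div_le_one_of_le₀ h2 (norm_nonneg _)
  have h7 : ‖(y : ℂ) ^ 2 - z ^ 2‖ * ‖z + y * Complex.I‖⁻¹ ^ 2 ≤ 1 := by
    rw [inv_pow, ← div_eq_mul_inv]; exact div_le_one_of_le₀ (h4.trans h3) (by positivity)
  calc _ = ‖Complex.exp (Complex.I * z)‖ * ((y * ‖z - (a - y * Complex.I)‖⁻¹)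
        * (‖(y : ℂ) ^ 2 - z ^ 2‖ * ‖z + y * Complex.I‖⁻¹ ^ 2)) := by ring
    _ ≤ 1 * (1 * 1) := by gcongr
    _ = 1 := by norm_num

lemma divDiff_regularPart_re {a y : ℝ} (hy : 0 < y) (ha : a ≠ 0)
    (hexp : Complex.exp (Complex.I * a) = 1) :
    (divDiff (regularPart a y) (a + y * Complex.I) (y * Complex.I)).re
      = y ^ 2 / (a * (a ^ 2 + 4 * y ^ 2)) * Real.exp (-y) := by
  have hD : a ^ 2 + 4 * y ^ 2 ≠ 0 := by positivity
  have hDC : ((a : ℂ) ^ 2 + 4 * y ^ 2) ≠ 0 := by exact_mod_cast hD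
  have hyC : (y : ℂ) ≠ 0 := by exact_mod_cast hy.ne'
  have haC : (a : ℂ) ≠ 0 := by exact_mod_cast ha
  have u1 : ((a : ℂ) + 2 * y * Complex.I)⁻¹ = (a - 2 * y * Complex.I) / (a ^ 2 + 4 * y ^ 2) := by
    rw [inv_eq_iff_eq_inv, eq_comm, inv_div, div_eq_iff]
    · linear_combination (4 : ℂ) * y ^ 2 * Complex.I_sq
    · intro h
      have := congrArg Complex.re h
      simp at this
      exact ha this
  have u2 : (-(a : ℂ) + 2 * y * Complex.I)⁻¹
      = -(a + 2 * y * Complex.I) / (a ^ 2 + 4 * y ^ 2) := by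
    rw [inv_eq_iff_eq_inv, eq_comm, inv_div, div_eq_iff]
    · linear_combination (4 : ℂ) * y ^ 2 * Complex.I_sq
    · intro h
      have := congrArg Complex.re h
      simp at this
      exact ha this
  have u3 : (2 * y * Complex.I : ℂ)⁻¹ = -Complex.I / (2 * y) := by
    rw [mul_inv, Complex.inv_I]; field_simp
  have E1 : Complex.exp (Complex.I * (y * Complex.I)) = Real.exp (-y) := by
    rw [Complex.ofReal_exp]
    congr 1
    push_cast
    linear_combination (y : ℂ) * Complex.I_sq
  have E2 : Complex.exp (Complex.I * (a + y * Complex.I)) = Real.exp (-y) := by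
    rw [mul_add, Complex.exp_add, hexp, one_mul, E1]
  have v1 : (a + y * Complex.I : ℂ) - (a - y * Complex.I) = 2 * y * Complex.I := by ring
  have v2 : (a + y * Complex.I : ℂ) + y * Complex.I = a + 2 * y * Complex.I := by ring
  have v3 : (y * Complex.I : ℂ) - (a - y * Complex.I) = -a + 2 * y * Complex.I := by ring
  have v4 : (y * Complex.I : ℂ) + y * Complex.I = 2 * y * Complex.I := by ring
  have hder := (regularPart_hasDerivAt (a := a) (y := y) (z := y * Complex.I)
    (by rw [v3]; intro h; have := congrArg Complex.re h; simp at this; exact ha this)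
    (by rw [v4]; simp [hy.ne'])).deriv
  rw [divDiff, hder, regularPart, regularPart, E1, E2, v1, v2, v3, v4, u1, u2, u3]
  generalize Real.exp (-y) = E
  have v5 : (a + y * Complex.I : ℂ) - y * Complex.I = a := by ring
  have v6 : (y ^ 2 - (y * Complex.I) ^ 2 : ℂ) = 2 * y ^ 2 := by
    linear_combination (-(y : ℂ) ^ 2) * Complex.I_sq
  have v7 : (y ^ 2 - (a + y * Complex.I) ^ 2 : ℂ) = 2 * y ^ 2 - a ^ 2 - 2 * a * y * Complex.I := by
    linear_combination (-(y : ℂ) ^ 2) * Complex.I_sq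
  rw [v5, v6, v7]
  -- Only the real part matters; the imaginary part is spelled out to make this a field identity.
  suffices h : ∀ w : ℂ, w = (y ^ 2 / (a * (a ^ 2 + 4 * y ^ 2)) * E : ℝ)
      + ((8 * y ^ 4 + a ^ 4 + 2 * a ^ 2 * y ^ 2 - y * (a ^ 2 * (2 * y + (a ^ 2 + 4 * y ^ 2))
        + 2 * y * (2 * a ^ 2 + 4 * y ^ 2))) / (2 * a ^ 2 * (a ^ 2 + 4 * y ^ 2) ^ 2) * E : ℝ)
        * Complex.I → w.re = y ^ 2 / (a * (a ^ 2 + 4 * y ^ 2)) * E by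
    apply h
    push_cast
    obtain ⟨D, hDdef⟩ : ∃ D : ℂ, D = (a : ℂ) ^ 2 + 4 * y ^ 2 := ⟨_, rfl⟩
    rw [← hDdef] at hDC ⊢
    field_simp
    rw [hDdef]
    ring_nf
    simp only [Complex.I_sq, Complex.I_pow_three, Complex.I_pow_four]
    ring
  rintro w rfl
  simp only [Complex.add_re, Complex.re_ofReal_mul, Complex.ofReal_re, Complex.I_re, mul_zero,
    add_zero]

lemma deriv_p_zero {x y : ℝ} (hy : 0 < y) :
    deriv (fun t => p 0 x t) y = (1 / π) * (x ^ 2 - y ^ 2) / (x ^ 2 + y ^ 2) ^ 2 := by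
  have h0 : (x - 2 * π * ((0 : ℤ) : ℝ)) ^ 2 + y ^ 2 ≠ 0 := by positivity
  have h1 : x ^ 2 + y ^ 2 ≠ 0 := by positivity
  have h := ((hasDerivAt_id y).const_mul (1 / π)).div
    (((hasDerivAt_id y).pow 2).const_add ((x - 2 * π * ((0 : ℤ) : ℝ)) ^ 2)) h0
  have h2 : HasDerivAt (fun t => p 0 x t) _ y := h
  rw [h2.deriv]
  simp
  field_simp
  ring

lemma integrand_eq_im {x y : ℝ} (hy : 0 < y) (n : ℤ) :
    p n x y * (-(deriv (fun t => p 0 x t) y)) * Real.sin x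
      = (1 / π ^ 2) * (regularPart (2 * π * n) y x
        * ((x : ℂ) - (((2 * π * n : ℝ) : ℂ) + y * Complex.I))⁻¹
        * ((x : ℂ) - y * Complex.I)⁻¹ ^ 2).im := by
  rw [deriv_p_zero hy, p, regularPart]
  generalize 2 * π * (n : ℝ) = a
  have f1 : ((x : ℂ) - (a - y * Complex.I))⁻¹ * ((x : ℂ) - (a + y * Complex.I))⁻¹
      = (((x - a) ^ 2 + y ^ 2 : ℝ) : ℂ)⁻¹ := by
    rw [← mul_inv]
    congr 1
    push_cast
    linear_combination (-(y : ℂ) ^ 2) * Complex.I_sq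
  have f2 : ((x : ℂ) + y * Complex.I)⁻¹ * ((x : ℂ) - y * Complex.I)⁻¹
      = ((x ^ 2 + y ^ 2 : ℝ) : ℂ)⁻¹ := by
    rw [← mul_inv]
    congr 1
    push_cast
    linear_combination (-(y : ℂ) ^ 2) * Complex.I_sq
  have f3 : Complex.exp (Complex.I * x) * (y * (y ^ 2 - (x : ℂ) ^ 2))
        * ((x : ℂ) - (a - y * Complex.I))⁻¹ * ((x : ℂ) + y * Complex.I)⁻¹ ^ 2
        * ((x : ℂ) - (a + y * Complex.I))⁻¹ * ((x : ℂ) - y * Complex.I)⁻¹ ^ 2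
      = ((y * (y ^ 2 - x ^ 2) * ((x - a) ^ 2 + y ^ 2)⁻¹ * (x ^ 2 + y ^ 2)⁻¹ ^ 2 : ℝ) : ℂ)
        * Complex.exp (x * Complex.I) := by
    have f4 : ((y * (y ^ 2 - x ^ 2) * ((x - a) ^ 2 + y ^ 2)⁻¹ * (x ^ 2 + y ^ 2)⁻¹ ^ 2 : ℝ) : ℂ)
        = (y * (y ^ 2 - (x : ℂ) ^ 2)) * (((x - a) ^ 2 + y ^ 2 : ℝ) : ℂ)⁻¹
          * (((x ^ 2 + y ^ 2 : ℝ) : ℂ)⁻¹) ^ 2 := by push_cast; rfl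
    rw [f4, ← f1, ← f2, mul_comm (x : ℂ) Complex.I]
    ring
  rw [f3, Complex.im_ofReal_mul, Complex.exp_ofReal_mul_I_im]
  field_simp
  ring

theorem integral_pn_mul_neg_dy_p0_sin (y : ℝ) (hy : 0 < y) (n : ℤ) (hn : n ≠ 0) :
    2 * π * ∫ x : ℝ, p n x y * (-(deriv (fun t => p 0 x t) y)) * Real.sin x
      = (1 / (2 * π * n)) * (y ^ 2 / (y ^ 2 + π ^ 2 * n ^ 2)) * Real.exp (-y) := by
  have hnR : (n : ℝ) ≠ 0 := by exact_mod_cast hn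
  have ha : 2 * π * (n : ℝ) ≠ 0 := mul_ne_zero Real.two_pi_pos.ne' hnR
  have hexp : Complex.exp (Complex.I * ((2 * π * n : ℝ) : ℂ)) = 1 := by
    rw [← Complex.exp_int_mul_two_pi_mul_I n]
    congr 1
    push_cast
    ring
  simp_rw [integrand_eq_im hy n]
  have hre := divDiff_regularPart_re hy ha hexp
  set a : ℝ := 2 * π * n with hadef
  have hα : 0 < ((a : ℂ) + y * Complex.I).im := by simpa using hy
  have hβ : 0 < (y * Complex.I : ℂ).im := by simpa using hy
  have hne : ((a : ℂ) + y * Complex.I) ≠ y * Complex.I := by simpa using ha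
  have hI := integrable_kernel hy regularPart_differentiableOn (regularPart_isBigO (a := a) hy)
    hα hβ
  have hV := integral_kernel hy regularPart_differentiableOn (regularPart_isBigO (a := a) hy)
    hy le_rfl hβ hne
  have him := integral_im hI
  rw [hV] at him
  simp only [RCLike.im_to_complex] at him
  rw [integral_const_mul, him]
  have him2 (w : ℂ) : (2 * π * Complex.I * w).im = 2 * π * w.re := by
    have : 2 * π * Complex.I * w = ((2 * π : ℝ) : ℂ) * (Complex.I * w) := by push_cast; ring
    rw [this, Complex.im_ofReal_mul, Complex.I_mul_im]
  rw [him2, hre, hadef]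
  have h1 : y ^ 2 + π ^ 2 * (n : ℝ) ^ 2 ≠ 0 := by positivity
  have h2 : (2 * π * (n : ℝ)) ^ 2 + 4 * y ^ 2 = 4 * (y ^ 2 + π ^ 2 * (n : ℝ) ^ 2) := by ring
  rw [h2]
  have hpi := Real.pi_ne_zero
  field_simp
  norm_num
end

section
/- For every y > 0, every integer n, and the sequence 𝒜_m(y) = 1/(y² + π²m²), the discrete Hilbert transform ℬ_n(y) = (1/π)·∑_{m≠0} 𝒜_{n−m}(y)/m converges and equals πn·coth(y)/(y(y² + π²n²)) − 2πn/(y² + π²n²)². -/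
/-!
With `D = y² + π²n²` and `h(k) = π²k / (y² + π²k²)`, partial fractions give, for `m ≠ 0`,
`1 / (m (y² + π²(n-m)²)) = D⁻¹ (1/m - h(m-n) + π²n 𝒜_{n-m})`.
The last summand contributes `π²n ∑ 𝒜_k = π²n coth y / y` by the Mittag-Leffler expansion of the
cotangent at `iy/π` (`hasSum_A`). The first two together have sum zero over all integers, in the
convention `1/0 = 0`, since `1/m - h(m-n) = (1/m - h(m)) + (h(m) - h(m-n))`, where `1/m - h(m)` is
odd and summable (`hasSum_inv_sub_h`), and `h(m) - h(m-n)` telescopes with `h` vanishing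
at infinity (`hasSum_h_sub_shift`). Since `m = 0` is excluded from the transform,
the value `2π²n/D` of the bracket there has to be subtracted.
-/

open Real

/-- The sequence `𝒜_m(y) = 1/(y² + π²m²)`. -/
noncomputable def A (m : ℤ) (y : ℝ) : ℝ := 1 / (y ^ 2 + π ^ 2 * m ^ 2)

theorem A_pos {y : ℝ} (hy : 0 < y) (m : ℤ) : 0 < A m y := by
  unfold A; positivity

theorem A_neg (m : ℤ) (y : ℝ) : A (-m) y = A m y := by
  simp [A]

/-- The Mittag-Leffler expansion of the cotangent, at the point `iy/π`. -/
theorem hasSum_A {y : ℝ} (hy : 0 < y) :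
    HasSum (fun m : ℤ => A m y) (cosh y / sinh y / y) := by
  have hpi : (π : ℂ) ≠ 0 := by exact_mod_cast pi_ne_zero
  have hyc : (y : ℂ) ≠ 0 := by exact_mod_cast hy.ne'
  have hs : 0 < sinh y := sinh_pos_iff.2 hy
  have hsc : Complex.sinh y ≠ 0 := by rw [← Complex.ofReal_sinh]; exact_mod_cast hs.ne'
  set x : ℂ := (y : ℂ) / π * Complex.I with hx
  have hxz : x ∈ Complex.integerComplement := by
    refine UpperHalfPlane.coe_mem_integerComplement ⟨x, ?_⟩
    have : x = ((y / π : ℝ) : ℂ) * Complex.I := by push_cast; rfl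
    rw [this, Complex.im_ofReal_mul, Complex.I_im]
    positivity
  have hS := (summable_cotTerm hxz).hasSum
  have hE := cot_series_rep' hxz
  change _ = ∑' n : ℕ, cotTerm x n at hE
  rw [← hE] at hS
  have hcot : Complex.cot (π * x) = -Complex.I * (Complex.cosh y / Complex.sinh y) := by
    have : (π : ℂ) * x = y * Complex.I := by rw [hx]; field_simp
    rw [this, Complex.cot, Complex.cos_mul_I, Complex.sin_mul_I]
    field_simp
    simp
  have hterm : ∀ k : ℕ, cotTerm x k =
      (-2 * Complex.I * y * π) * ((A ((k : ℤ) + 1) y : ℝ) : ℂ) := by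
    intro k
    have hq : ((y : ℂ) ^ 2 + π ^ 2 * (k + 1) ^ 2) ≠ 0 := by
      have : 0 < y ^ 2 + π ^ 2 * (k + 1) ^ 2 := by positivity
      exact_mod_cast this.ne'
    have hprod : (x + (k + 1)) * (x - (k + 1)) =
        -((y : ℂ) ^ 2 + π ^ 2 * (k + 1) ^ 2) / π ^ 2 := by
      rw [hx]; field_simp; ring_nf; rw [Complex.I_sq]; ring
    rw [cotTerm_identity hxz, hprod, A, hx]
    push_cast
    field_simp
  simp_rw [hterm] at hS
  have hc : (-2 * Complex.I * y * π : ℂ) ≠ 0 := by simp [hyc, hpi]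
  have hN : HasSum (fun k : ℕ => A ((k : ℤ) + 1) y)
      ((cosh y / sinh y / y - 1 / y ^ 2) / 2) := by
    rw [← Complex.hasSum_ofReal]
    have e : (π : ℂ) * Complex.cot (π * x) - 1 / x = (-2 * Complex.I * y * π) *
        (((cosh y / sinh y / y - 1 / y ^ 2) / 2 : ℝ) : ℂ) := by
      rw [hcot, hx]
      push_cast
      field_simp
      ring_nf
      simp only [Complex.I_sq]
      ring
    rw [← hasSum_mul_left_iff hc, ← e]
    exact hS
  have hN' : HasSum (fun k : ℕ => A (-((k : ℤ) + 1)) y)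
      ((cosh y / sinh y / y - 1 / y ^ 2) / 2) := by
    simpa only [A_neg] using hN
  have e : cosh y / sinh y / y = (cosh y / sinh y / y - 1 / y ^ 2) / 2 + A 0 y +
      (cosh y / sinh y / y - 1 / y ^ 2) / 2 := by
    simp only [A]
    push_cast
    ring
  rw [e]
  exact HasSum.of_add_one_of_neg_add_one hN hN'

/-- The odd sequence `h(m) = π²m / (y² + π²m²)`, a regularisation of `1/m`. -/
noncomputable def h (y : ℝ) (m : ℤ) : ℝ := π ^ 2 * m * A m y

theorem h_neg (y : ℝ) (m : ℤ) : h y (-m) = -h y m := by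
  simp [h, A_neg]

/-- The sum vanishes by oddness; the term at `0` is `0` since `1 / 0 = 0` in Lean. -/
theorem hasSum_inv_sub_h {y : ℝ} (hy : 0 < y) :
    HasSum (fun m : ℤ => 1 / (m : ℝ) - h y m) 0 := by
  have hsum : Summable (fun m : ℤ => 1 / (m : ℝ) - h y m) := by
    refine Summable.of_norm_bounded ((hasSum_A hy).summable.mul_left (y ^ 2)) fun m => ?_
    have hA := A_pos hy m
    rcases eq_or_ne m 0 with rfl | hm
    · simp only [h, Int.cast_zero, div_zero, mul_zero, zero_mul, sub_zero, norm_zero]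
      positivity
    have hm' : (m : ℝ) ≠ 0 := by exact_mod_cast hm
    have h1 : 1 ≤ |(m : ℝ)| := by exact_mod_cast Int.one_le_abs hm
    have hQ : 0 < y ^ 2 + π ^ 2 * (m : ℝ) ^ 2 := by positivity
    have e : 1 / (m : ℝ) - h y m = y ^ 2 * A m y / m := by
      rw [h, A]; field_simp; ring
    rw [e, Real.norm_eq_abs, abs_div, abs_of_pos (by positivity : 0 < y ^ 2 * A m y)]
    exact div_le_self (by positivity) h1
  obtain ⟨s, hs⟩ := hsum
  have h2 := (Equiv.neg ℤ).hasSum_iff.2 hs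
  have h3 : HasSum (fun m : ℤ => 1 / (m : ℝ) - h y m) (-s) := by
    refine (congrArg (HasSum · _) (funext fun m => ?_)).mp h2.neg
    simp only [Function.comp, Equiv.neg_apply, h_neg, Int.cast_neg, one_div, inv_neg]
    ring
  have : s = 0 := by linarith [hs.unique h3]
  rwa [this] at hs

/-- Each term is at most `π² (𝒜_m + 𝒜_{m+1})` in absolute value, so the sum converges absolutely, and
the sum over `[-N, N)` telescopes to `h(-N) - h(N) = -2 h(N)`, which tends to `0`. -/
theorem hasSum_h_sub_succ {y : ℝ} (hy : 0 < y) :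
    HasSum (fun m : ℤ => h y m - h y (m + 1)) 0 := by
  have hA := (hasSum_A hy).summable
  have hA1 : Summable (fun m : ℤ => A (m + 1) y) := (Equiv.addRight (1 : ℤ)).summable_iff.2 hA
  have hsum : Summable (fun m : ℤ => h y m - h y (m + 1)) := by
    refine Summable.of_norm_bounded ((hA.add hA1).mul_left (π ^ 2)) fun m => ?_
    have hQ : 0 < y ^ 2 + π ^ 2 * (m : ℝ) ^ 2 := by positivity
    have hQ1 : 0 < y ^ 2 + π ^ 2 * ((m : ℝ) + 1) ^ 2 := by positivity
    have e : h y m - h y (m + 1) = π ^ 2 * (π ^ 2 * (m * (m + 1)) - y ^ 2) /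
        ((y ^ 2 + π ^ 2 * (m : ℝ) ^ 2) * (y ^ 2 + π ^ 2 * ((m : ℝ) + 1) ^ 2)) := by
      simp only [h, A]; push_cast; field_simp; ring
    have e2 : π ^ 2 * (A m y + A (m + 1) y) =
        π ^ 2 * ((y ^ 2 + π ^ 2 * (m : ℝ) ^ 2) + (y ^ 2 + π ^ 2 * ((m : ℝ) + 1) ^ 2)) /
        ((y ^ 2 + π ^ 2 * (m : ℝ) ^ 2) * (y ^ 2 + π ^ 2 * ((m : ℝ) + 1) ^ 2)) := by
      simp only [A]; push_cast; field_simp; ring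
    have hp : 0 < π ^ 2 := by positivity
    rw [e, e2, Real.norm_eq_abs, abs_div, abs_of_pos (mul_pos hQ hQ1), abs_mul, abs_of_pos hp]
    gcongr
    rw [abs_le]
    have q1 : 0 ≤ π ^ 2 * ((m : ℝ) ^ 2 + (m + 1) ^ 2 + m * (m + 1)) :=
      mul_nonneg hp.le (by nlinarith [sq_nonneg ((m : ℝ) + (m + 1))])
    have q2 : 0 ≤ π ^ 2 * ((m : ℝ) ^ 2 + (m + 1) ^ 2 - m * (m + 1)) :=
      mul_nonneg hp.le (by nlinarith [sq_nonneg ((m : ℝ) - (m + 1))])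
    constructor <;> nlinarith [sq_nonneg y]
  have hlim : Filter.Tendsto (fun N : ℕ => h y N) Filter.atTop (nhds 0) := by
    refine squeeze_zero (fun N => ?_) (fun N => ?_) tendsto_one_div_atTop_nhds_zero_nat
    · have := A_pos hy N
      unfold h; push_cast; positivity
    · rcases Nat.eq_zero_or_pos N with rfl | hN
      · simp [h]
      have hN' : (0 : ℝ) < N := by exact_mod_cast hN
      rw [h, A]
      push_cast
      rw [mul_one_div, div_le_div_iff₀ (by positivity) hN']
      nlinarith [sq_nonneg y]
  have ht := hsum.hasSum.comp Finset.tendsto_Ico_neg_atTop_atTop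
  have h0 : Filter.Tendsto (fun N : ℕ => h y (-N) - h y N) Filter.atTop (nhds 0) := by
    simp only [h_neg]
    simpa using hlim.neg.sub hlim
  have hz : ∑' m : ℤ, (h y m - h y (m + 1)) = 0 := by
    refine tendsto_nhds_unique (ht.comp tendsto_natCast_atTop_atTop) (h0.congr fun N => ?_)
    exact (Finset.sum_Ico_int_sub N (h y)).symm
  simpa only [hz] using hsum.hasSum

theorem hasSum_h_sub_shift {y : ℝ} (hy : 0 < y) (n : ℤ) :
    HasSum (fun m : ℤ => h y m - h y (m - n)) 0 := by
  have step (j : ℤ) : HasSum (fun m : ℤ => h y (m - (j + 1)) - h y (m - j)) 0 := by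
    have := (Equiv.subRight (j + 1)).hasSum_iff.2 (hasSum_h_sub_succ hy)
    refine (congrArg (HasSum · _) (funext fun m => ?_)).mp this
    have e : m - (j + 1) + 1 = m - j := by ring
    simp only [Function.comp, Equiv.subRight_apply, e]
  induction n with
  | zero => simp [hasSum_zero]
  | succ j ih => simpa using ih.sub (step j)
  | pred j ih => simpa using ih.add (step (-j - 1))

theorem dht_of_A (y : ℝ) (hy : 0 < y) (n : ℤ) :
    HasSum (fun m : ℤ => if m = 0 then 0 else (1 / π) * A (n - m) y / m)
      (π * n * (Real.cosh y / Real.sinh y) / (y * (y ^ 2 + π ^ 2 * n ^ 2))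
        - 2 * π * n / (y ^ 2 + π ^ 2 * n ^ 2) ^ 2) := by
  have hD : 0 < y ^ 2 + π ^ 2 * (n : ℝ) ^ 2 := by positivity
  have hs : 0 < sinh y := sinh_pos_iff.2 hy
  have hA : HasSum (fun m : ℤ => A (n - m) y) (cosh y / sinh y / y) :=
    (Equiv.subLeft n).hasSum_iff.2 (hasSum_A hy)
  have h0 := hasSum_ite_eq (0 : ℤ) (2 * π ^ 2 * n / (y ^ 2 + π ^ 2 * (n : ℝ) ^ 2))
  have key := ((((hasSum_inv_sub_h hy).add (hasSum_h_sub_shift hy n)).add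
    (hA.mul_left (π ^ 2 * n))).sub h0).mul_left (1 / (π * (y ^ 2 + π ^ 2 * (n : ℝ) ^ 2)))
  have hval : π * n * (cosh y / sinh y) / (y * (y ^ 2 + π ^ 2 * n ^ 2))
      - 2 * π * n / (y ^ 2 + π ^ 2 * n ^ 2) ^ 2 = 1 / (π * (y ^ 2 + π ^ 2 * (n : ℝ) ^ 2)) *
      (0 + 0 + π ^ 2 * n * (cosh y / sinh y / y) -
        2 * π ^ 2 * n / (y ^ 2 + π ^ 2 * (n : ℝ) ^ 2)) := by
    field_simp
    ring
  rw [hval]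
  refine (congrArg (HasSum · _) (funext fun m => ?_)).mp key
  rcases eq_or_ne m 0 with rfl | hm
  · simp only [if_true, h, A]
    push_cast
    simp only [zero_sub, sub_zero, neg_sq]
    field_simp
    ring
  · have hm' : (m : ℝ) ≠ 0 := by exact_mod_cast hm
    have hQ : 0 < y ^ 2 + π ^ 2 * ((n : ℝ) - m) ^ 2 := by positivity
    have hsymm : A (m - n) y = A (n - m) y := by rw [← A_neg, neg_sub]
    simp only [if_neg hm, h, hsymm]
    simp only [A]
    push_cast
    field_simp
    ring
end

section
/- For every y > 0 and nonzero integer n, the discrete Hilbert transform of the sequence 𝒞_m(y) = ∫_0^y t·sinh(t)/(t² + π²m²) dt evaluated at index n equals (1/(πn))·(sinh(y) − y²·sinh(y)/(y² + π²n²)); at n = 0 it equals 0. -/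
/-!
For `t > 0` the kernel `t / (t² + π²k²)` is `-(1/π) Im (1/(k + it/π))`. Hence its discrete Hilbert
transform at `n` is `-1/π²` times the imaginary part of `∑_{m ≠ 0} 1/(m(w - m))` with
`w = n + it/π`, and the Mittag-Leffler expansion of the cotangent (`hasSum_cot`) evaluates that sum as
`(π cot(πw) - 1/w)/w`. By periodicity `cot(πw) = -i coth t`, which gives `hasSum_kernel`.

After multiplication by `sinh t / π`, the sum over `m` is the exact derivative of
`π n sinh t / (t² + π²n²)`. The bound `integrand_le` permits integrating term by term over `(0, y]`,
and `π n sinh y / (y² + π²n²)` is the claimed value.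
-/

open Real

/-- The sequence `𝒞_m(y) = ∫₀^y t·sinh t/(t² + π²m²) dt`. -/
noncomputable def C (m : ℤ) (y : ℝ) : ℝ :=
  ∫ t in (0 : ℝ)..y, t * Real.sinh t / (t ^ 2 + π ^ 2 * m ^ 2)

/-- The Mittag-Leffler expansion of the cotangent, in the absolutely convergent form
`∑_{m ≠ 0} 1/(m(w - m)) = (π cot(πw) - 1/w)/w`; the term `m = 0` vanishes since `0⁻¹ = 0`. -/
lemma hasSum_cot {w : ℂ} (hw : w ∈ Complex.integerComplement) :
    HasSum (fun m : ℤ => (m : ℂ)⁻¹ * (w - m)⁻¹) (w⁻¹ * (π * Complex.cot (π * w) - w⁻¹)) := by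
  have hs : Summable (fun m : ℤ => (m : ℂ)⁻¹ * (w - m)⁻¹) :=
    (EisensteinSeries.summable_linear_sub_mul_linear_add w 1 0).congr (by simp [mul_comm])
  have hw0 : w ≠ 0 := Complex.integerComplement.ne_zero hw
  convert hs.hasSum using 1
  rw [tsum_int_eq_zero_add_tsum_pnat hs]
  have h := cot_series_rep hw
  rw [← sub_eq_iff_eq_add'] at h
  simp only [one_div] at h
  have s1 : Summable (fun k : ℕ+ => (((k : ℤ) : ℂ))⁻¹ * (w - ((k : ℤ) : ℂ))⁻¹) :=
    hs.comp_injective (i := fun k : ℕ+ => (k : ℤ)) (fun a b hab => by simpa using hab)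
  have s2 : Summable (fun k : ℕ+ => (((-(k : ℤ) : ℤ) : ℂ))⁻¹ * (w - ((-(k : ℤ) : ℤ) : ℂ))⁻¹) :=
    hs.comp_injective (i := fun k : ℕ+ => -(k : ℤ)) (fun a b hab => by simpa using hab)
  rw [h, ← tsum_mul_left, add_assoc, ← s1.tsum_add s2]
  simp only [Int.cast_zero, inv_zero, zero_mul, zero_add]
  congr 1
  funext k
  have hk : (k : ℂ) ≠ 0 := by exact_mod_cast k.ne_zero
  have h1 : w + (k : ℂ) ≠ 0 := by
    simpa using Complex.integerComplement_add_ne_zero hw (k : ℤ)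
  have h2 : w - (k : ℂ) ≠ 0 := by
    simpa [sub_eq_add_neg] using Complex.integerComplement_add_ne_zero hw (-(k : ℤ))
  push_cast
  rw [sub_neg_eq_add]
  field_simp
  ring

lemma hasSum_of_eq {f g : ℤ → ℝ} {a b : ℝ} (h : HasSum f a) (hf : ∀ m, g m = f m) (hb : b = a) :
    HasSum g b := by
  rwa [funext hf, hb]

/-- The discrete Hilbert transform of the kernel `k ↦ t/(t² + π²k²)`, up to the factor `1/π`.
The kernel is `-(1/π) Im (1/(k + it/π))`, so this is `-1/π` times the imaginary part of
`hasSum_cot` at `w = n + it/π`, where the `π`-periodicity of the cotangent gives `cot(πw) = -i coth t`. -/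
lemma hasSum_kernel {t : ℝ} (ht : 0 < t) (n : ℤ) :
    HasSum (fun m : ℤ => (m : ℝ)⁻¹ * (t / (t ^ 2 + π ^ 2 * ((n - m : ℤ) : ℝ) ^ 2)))
      (π ^ 2 * n * (Real.cosh t / Real.sinh t / (t ^ 2 + π ^ 2 * n ^ 2)
        - 2 * t / (t ^ 2 + π ^ 2 * n ^ 2) ^ 2)) := by
  have hpi : (π : ℂ) ≠ 0 := by exact_mod_cast Real.pi_ne_zero
  have hpr := Real.pi_ne_zero
  have hsh : Real.sinh t ≠ 0 := (Real.sinh_pos_iff.2 ht).ne'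
  set w : ℂ := n + (t / π : ℝ) * Complex.I with hw
  have hwi : w.im = t / π := by simp [hw]
  have hwr : w.re = n := by simp [hw]
  have hmem : w ∈ Complex.integerComplement := by
    rintro ⟨k, hk⟩
    have := congrArg Complex.im hk
    rw [hwi, Complex.intCast_im] at this
    exact (div_pos ht Real.pi_pos).ne this
  have hcot : Complex.cot (π * w) = -Complex.I * (Real.cosh t / Real.sinh t : ℝ) := by
    have : (π * w : ℂ) = t * Complex.I + n * π := by
      rw [hw]; push_cast; field_simp; ring
    rw [this, Complex.cot, Complex.cos_antiperiodic.add_int_mul_eq,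
      Complex.sin_antiperiodic.add_int_mul_eq]
    rw [mul_div_mul_left _ _ (by simp), Complex.cos_mul_I, Complex.sin_mul_I]
    push_cast
    rw [← Complex.ofReal_sinh]
    have : (Real.sinh t : ℂ) ≠ 0 := by exact_mod_cast hsh
    field_simp
    simp
  have h := (Complex.hasSum_im (hasSum_cot hmem)).mul_left (-(1 / π))
  have hn : ∀ k : ℝ, t ^ 2 + π ^ 2 * k ^ 2 ≠ 0 := fun k => by positivity
  have hq : ∀ k : ℝ, k * k + t / π * (t / π) = (t ^ 2 + π ^ 2 * k ^ 2) / π ^ 2 := fun k => by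
    field_simp; ring
  refine hasSum_of_eq h ?_ ?_
  · intro m
    have e : ((m : ℂ)⁻¹ * (w - m)⁻¹) = ((m : ℝ)⁻¹ : ℝ) * (w - m)⁻¹ := by push_cast; rfl
    rw [e, Complex.im_ofReal_mul, Complex.inv_im, Complex.normSq_apply]
    simp only [Complex.sub_im, Complex.sub_re, hwi, hwr, Complex.intCast_re, Complex.intCast_im,
      sub_zero]
    have := hn (n - m)
    rw [hq]
    push_cast
    field_simp
  · rw [hcot]
    simp only [Complex.mul_im, Complex.sub_im, Complex.sub_re, Complex.mul_re, Complex.inv_im,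
      Complex.inv_re, Complex.normSq_apply, hwi, hwr, Complex.ofReal_re, Complex.ofReal_im,
      Complex.neg_re, Complex.neg_im, Complex.I_re, Complex.I_im]
    have := hn n
    rw [hq]
    field_simp
    ring

/-- Bound on the integrand of `C k y`, uniform in `t ∈ (0, y]` and summable in `k`. At `k = 0` the
quotient `y ^ 2 / k ^ 2` is `0`, and `sinh t / t ≤ cosh y` is used instead. -/
lemma integrand_le {t y : ℝ} (ht : 0 < t) (hty : t ≤ y) (k : ℤ) :
    t * Real.sinh t / (t ^ 2 + π ^ 2 * (k : ℝ) ^ 2) ≤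
      Real.cosh y * ((if k = 0 then 1 else 0) + y ^ 2 * (1 / (k : ℝ) ^ 2)) := by
  have hsc : Real.sinh t ≤ t * Real.cosh y := by
    have := Convex.image_sub_le_mul_sub_of_deriv_le (convex_Icc 0 y)
      Real.continuous_sinh.continuousOn Real.differentiable_sinh.differentiableOn
      (C := Real.cosh y) (fun x hx => by
        rw [interior_Icc] at hx
        rw [Real.deriv_sinh, Real.cosh_le_cosh, abs_of_pos hx.1, abs_of_pos (ht.trans_le hty)]
        exact hx.2.le) 0 ⟨le_rfl, ht.le.trans hty⟩ t ⟨ht.le, hty⟩ ht.le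
    simp at this
    linarith
  have hc := Real.cosh_pos y
  have h1 : t * Real.sinh t ≤ t ^ 2 * Real.cosh y := by nlinarith
  by_cases hk : k = 0
  · subst hk
    simp only [Int.cast_zero, if_true]
    rw [div_le_iff₀ (by positivity)]
    simp
    linarith
  · have hk' : (k : ℝ) ≠ 0 := by exact_mod_cast hk
    have hk2 : 0 < (k : ℝ) ^ 2 := by positivity
    rw [if_neg hk, zero_add]
    calc t * Real.sinh t / (t ^ 2 + π ^ 2 * (k : ℝ) ^ 2) ≤ (y ^ 2 * Real.cosh y) / (k : ℝ) ^ 2 := by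
          refine div_le_div₀ (by positivity) (h1.trans ?_) hk2 ?_
          · gcongr
          · have hp1 : 1 ≤ π ^ 2 := one_le_pow₀ (by linarith [Real.pi_gt_three])
            nlinarith [sq_nonneg t]
      _ = _ := by ring

theorem dht_of_C (y : ℝ) (hy : 0 < y) (n : ℤ) :
    HasSum (fun m : ℤ => if m = 0 then 0 else (1 / π) * C (n - m) y / m)
      (if n = 0 then 0 else
        (1 / (π * n)) * (Real.sinh y - y ^ 2 * Real.sinh y / (y ^ 2 + π ^ 2 * n ^ 2))) := by
  have hpr := Real.pi_ne_zero
  let F : ℤ → ℝ → ℝ := fun m t =>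
    (1 / π * (m : ℝ)⁻¹) * (t * Real.sinh t / (t ^ 2 + π ^ 2 * ((n - m : ℤ) : ℝ) ^ 2))
  let B : ℤ → ℝ := fun m => Real.cosh y * ((if n - m = 0 then 1 else 0)
    + y ^ 2 * (1 / ((n - m : ℤ) : ℝ) ^ 2))
  let f : ℝ → ℝ := fun t => π * n * ((Real.cosh t * (t ^ 2 + π ^ 2 * n ^ 2)
    - Real.sinh t * (2 * t)) / (t ^ 2 + π ^ 2 * n ^ 2) ^ 2)
  have hB : Summable B := by
    have h0 : Summable (fun k : ℤ => Real.cosh y * ((if k = 0 then 1 else 0)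
        + y ^ 2 * (1 / (k : ℝ) ^ 2))) := by
      refine Summable.mul_left _ (Summable.add ?_ (Summable.mul_left _ ?_))
      · exact (hasSum_ite_eq 0 1).summable
      · exact Real.summable_one_div_int_pow.2 one_lt_two
    exact h0.comp_injective (i := fun m => n - m) (fun a b hab => by simpa using hab)
  have key : HasSum (fun m => ∫ t in (0 : ℝ)..y, F m t) (∫ t in (0 : ℝ)..y, f t) := by
    refine intervalIntegral.hasSum_integral_of_dominated_convergence (fun m _ => B m) ?_ ?_ ?_ ?_ ?_
    · intro m
      have : Measurable (F m) := by fun_prop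
      exact this.aestronglyMeasurable
    · refine fun m => Filter.Eventually.of_forall fun t ht => ?_
      rw [Set.uIoc_of_le hy.le] at ht
      have hs := Real.sinh_pos_iff.2 ht.1
      have ht0 := ht.1
      have hc : ‖1 / π * (m : ℝ)⁻¹‖ ≤ 1 := by
        rw [norm_mul, norm_inv, norm_div, norm_one, Real.norm_of_nonneg Real.pi_pos.le]
        refine mul_le_one₀ ?_ (by positivity) ?_
        · rw [div_le_one Real.pi_pos]; linarith [Real.pi_gt_three]
        · rcases eq_or_ne m 0 with rfl | hm
          · simp
          · refine inv_le_one_of_one_le₀ ?_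
            rw [Int.norm_cast_real, Int.norm_eq_abs]
            exact_mod_cast Int.one_le_abs hm
      have hp : 0 ≤ t * Real.sinh t / (t ^ 2 + π ^ 2 * ((n - m : ℤ) : ℝ) ^ 2) := by positivity
      calc ‖F m t‖ ≤ 1 * (t * Real.sinh t / (t ^ 2 + π ^ 2 * ((n - m : ℤ) : ℝ) ^ 2)) := by
            rw [norm_mul, Real.norm_of_nonneg hp]
            gcongr
        _ ≤ B m := by rw [one_mul]; exact integrand_le ht.1 ht.2 _
    · exact Filter.Eventually.of_forall fun t _ => hB
    · exact intervalIntegrable_const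
    · refine Filter.Eventually.of_forall fun t ht => ?_
      rw [Set.uIoc_of_le hy.le] at ht
      have hs := (Real.sinh_pos_iff.2 ht.1).ne'
      have ht0 := ht.1
      have hd : t ^ 2 + π ^ 2 * (n : ℝ) ^ 2 ≠ 0 := by positivity
      have := (hasSum_kernel ht.1 n).mul_left (1 / π * Real.sinh t)
      refine hasSum_of_eq this ?_ ?_
      · intro m
        simp only [F]
        ring
      · simp only [f]
        field_simp
  have hval : (∫ t in (0 : ℝ)..y, f t) = if n = 0 then 0 else
        (1 / (π * n)) * (Real.sinh y - y ^ 2 * Real.sinh y / (y ^ 2 + π ^ 2 * n ^ 2)) := by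
    by_cases hn : n = 0
    · simp [f, hn]
    · have hn' : (n : ℝ) ≠ 0 := by exact_mod_cast hn
      have hd : ∀ t : ℝ, t ^ 2 + π ^ 2 * (n : ℝ) ^ 2 ≠ 0 := fun t => by positivity
      rw [if_neg hn, intervalIntegral.integral_eq_sub_of_hasDerivAt
        (f := fun t => π * n * (Real.sinh t / (t ^ 2 + π ^ 2 * n ^ 2)))]
      · have := hd y
        simp
        field_simp
        ring
      · intro t _
        have h2 : HasDerivAt (fun t : ℝ => t ^ 2 + π ^ 2 * (n : ℝ) ^ 2) (2 * t) t := by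
          simpa using (hasDerivAt_pow 2 t).add_const (π ^ 2 * (n : ℝ) ^ 2)
        exact ((Real.hasDerivAt_sinh t).div h2 (hd t)).const_mul _
      · refine Continuous.intervalIntegrable ?_ _ _
        refine Continuous.mul continuous_const (Continuous.div ?_ ?_ fun t => pow_ne_zero 2 (hd t))
        · fun_prop
        · fun_prop
  rw [← hval]
  convert key using 1
  funext m
  simp only [F, C, intervalIntegral.integral_const_mul]
  split_ifs with hm
  · simp [hm]
  · ring
end
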